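/- Let Γ be a countably infinite group and let LO_ne(Γ) ⊆ 2^(Γ×Γ) be the (G_δ) set of linear orders on Γ without endpoints, i.e. reflexive, antisymmetric, transitive, total binary relations with no maximum and no minimum element, equipped with the logic action of Γ. Then there do not exist a Γ-invariant Borel set X ⊆ LO_ne(Γ) that is comeagre in LO_ne(Γ) (in the subspace topology) and a Borel Γ-equivariant map f : X → 2^Γ such that for every L ∈ X, the set f(L) ⊆ Γ with the restriction of L is order-isomorphic to (ℤ, ≤). -/

import Mathlib

/-!
The argument is a category argument in the Baire space `LOne Γ` of linear orders without endpoints.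

Suppose `f` is such a selector. For `a : Γ` the set `{L | a ∈ f L}` is Borel, hence agrees up to a
meagre set with an open set. As `f L` is non-empty for comeagrely many `L`, for some `a` this open
set `U` is non-empty: a finite piece `p` of a linear order generically forces `a ∈ f L`. By
equivariance, the translate `γ · p` generically forces `γ * a ∈ f L`.

Since `Γ` is infinite, for every finite `F` some translate of the domain of `p` is disjoint from
`F`, and then this translate of `p` can be inserted into any open interval of any given order,
without altering the order on `F` (`exists_amalgam`). So for a generic `L` and any `x < y` in `L`
there is some `γ` with `x < γ * a < y` and `L ∈ γ · U`, hence with `γ * a ∈ f L`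
(`dense_interval_set`). In particular `f L` has no two consecutive elements, so it is not
order-isomorphic to `ℤ`.
-/

/-- The logic action of `Γ` on binary relations on `Γ` (coded as points of `2^(Γ×Γ)`):
`(γ·R)(x,y) ⇔ R(γ⁻¹x, γ⁻¹y)`. -/
def logicAct {Γ : Type*} [Group Γ] (γ : Γ) (R : Γ × Γ → Bool) : Γ × Γ → Bool :=
  fun q => R (γ⁻¹ * q.1, γ⁻¹ * q.2)

/-- `R` codes a linear order on `Γ` without endpoints. -/
def IsLinOrderNoEnd {Γ : Type*} (R : Γ × Γ → Bool) : Prop :=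
  (∀ x, R (x, x) = true) ∧
  (∀ x y, R (x, y) = true → R (y, x) = true → x = y) ∧
  (∀ x y z, R (x, y) = true → R (y, z) = true → R (x, z) = true) ∧
  (∀ x y, R (x, y) = true ∨ R (y, x) = true) ∧
  (∀ x, ∃ y, y ≠ x ∧ R (x, y) = true) ∧
  (∀ x, ∃ y, y ≠ x ∧ R (y, x) = true)

section OrderCoding

universe u

/-- An injection into a linear order pulls the order back to a point of `LO_ne(Γ)` as soon as
every value has another value above it and another one below it. -/
lemma isLinOrderNoEnd_of_injective {Γ α : Type*} [LinearOrder α] (k : Γ → α)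
    (hk : Function.Injective k) (hup : ∀ x, ∃ y, k x < k y) (hdn : ∀ x, ∃ y, k y < k x) :
    IsLinOrderNoEnd (fun q : Γ × Γ => decide (k q.1 ≤ k q.2)) := by
  refine ⟨?_, ?_, ?_, ?_, ?_, ?_⟩ <;> simp only [decide_eq_true_eq]
  · exact fun x => le_rfl
  · exact fun x y h1 h2 => hk (le_antisymm h1 h2)
  · exact fun x y z h1 h2 => h1.trans h2
  · exact fun x y => le_total _ _
  · intro x
    obtain ⟨y, hy⟩ := hup x
    exact ⟨y, fun h => by simp [h] at hy, hy.le⟩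
  · intro x
    obtain ⟨y, hy⟩ := hdn x
    exact ⟨y, fun h => by simp [h] at hy, hy.le⟩

/-- A point of `LO_ne(Γ)` as a bijection onto an endpoint-free linear order. The order is put on an
abstract type `α`, so that several orders on `Γ` can be used side by side. -/
lemma IsLinOrderNoEnd.exists_equiv {Γ : Type u} {R : Γ × Γ → Bool} (h : IsLinOrderNoEnd R) :
    ∃ (α : Type u) (_ : LinearOrder α) (_ : NoMaxOrder α) (_ : NoMinOrder α) (e : Γ ≃ α),
      ∀ x y, R (x, y) = true ↔ e x ≤ e y := by
  classical
  obtain ⟨h1, h2, h3, h4, h5, h6⟩ := h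
  let I : LinearOrder Γ :=
    { le := fun x y => R (x, y) = true
      le_refl := h1
      le_trans := h3
      le_antisymm := h2
      le_total := h4
      toDecidableLE := Classical.decRel _ }
  refine ⟨Γ, I, ⟨fun x => ?_⟩, ⟨fun x => ?_⟩, Equiv.refl Γ, fun x y => Iff.rfl⟩
  · obtain ⟨y, hy, hxy⟩ := h5 x
    exact ⟨y, lt_of_le_of_ne hxy hy.symm⟩
  · obtain ⟨y, hy, hxy⟩ := h6 x
    exact ⟨y, lt_of_le_of_ne hxy hy⟩

/-- Amalgamation: the finite piece of `R₂` on `S` can be inserted immediately above `x` into the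
restriction of `R₁` to the complement of `S`. -/
lemma exists_amalgam {Γ : Type*} {R₁ R₂ : Γ × Γ → Bool} (h₁ : IsLinOrderNoEnd R₁)
    (h₂ : IsLinOrderNoEnd R₂) (S : Finset Γ) (x : Γ) (hx : x ∉ S) :
    ∃ R : Γ × Γ → Bool, IsLinOrderNoEnd R ∧
      (∀ z ∉ S, ∀ w ∉ S, R (z, w) = R₁ (z, w)) ∧
      (∀ z ∈ S, ∀ w ∈ S, R (z, w) = R₂ (z, w)) ∧
      (∀ s ∈ S, R (s, x) = false) ∧
      (∀ y ∉ S, R₁ (y, x) = false → ∀ s ∈ S, R (y, s) = false) := by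
  classical
  obtain ⟨α, _, _, _, e₁, he₁⟩ := h₁.exists_equiv
  obtain ⟨β, _, _, _, e₂, he₂⟩ := h₂.exists_equiv
  -- Elements of `S` lie in the fibre over `x`, ordered by `R₂`, with `x` itself at the bottom.
  let k : Γ → α ×ₗ WithBot β := fun z =>
    if z ∈ S then toLex (e₁ x, (e₂ z : WithBot β)) else toLex (e₁ z, ⊥)
  have kin : ∀ z ∈ S, k z = toLex (e₁ x, (e₂ z : WithBot β)) := fun z hz => if_pos hz
  have kout : ∀ z ∉ S, k z = toLex (e₁ z, ⊥) := fun z hz => if_neg hz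
  have hkinj : Function.Injective k := by
    intro z w hzw
    by_cases hz : z ∈ S <;> by_cases hw : w ∈ S
    · rw [kin z hz, kin w hw] at hzw
      simpa using hzw
    · rw [kin z hz, kout w hw] at hzw
      simp at hzw
    · rw [kout z hz, kin w hw] at hzw
      simp at hzw
    · rw [kout z hz, kout w hw] at hzw
      simpa using hzw
  refine ⟨fun q => decide (k q.1 ≤ k q.2), isLinOrderNoEnd_of_injective k hkinj ?_ ?_,
    ?_, ?_, ?_, ?_⟩
  -- No endpoints: there are infinitely many elements beyond a given one, so one outside `S`.
  · intro z
    obtain ⟨b, hb, hbS⟩ :=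
      (Set.Ioi_infinite (ofLex (k z)).1).exists_notMem_finset (S.image e₁)
    obtain ⟨y, rfl⟩ := e₁.surjective b
    have hy : y ∉ S := fun h => hbS (Finset.mem_image_of_mem _ h)
    refine ⟨y, ?_⟩
    rw [kout y hy, Prod.Lex.lt_iff]
    exact Or.inl hb
  · intro z
    obtain ⟨b, hb, hbS⟩ :=
      (Set.Iio_infinite (ofLex (k z)).1).exists_notMem_finset (S.image e₁)
    obtain ⟨y, rfl⟩ := e₁.surjective b
    have hy : y ∉ S := fun h => hbS (Finset.mem_image_of_mem _ h)
    refine ⟨y, ?_⟩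
    rw [kout y hy, Prod.Lex.lt_iff]
    exact Or.inl hb
  · intro z hz w hw
    rw [Bool.eq_iff_iff, he₁, decide_eq_true_eq]
    simp only [kout z hz, kout w hw, Prod.Lex.toLex_le_toLex]
    simp [le_iff_lt_or_eq]
  · intro z hz w hw
    rw [Bool.eq_iff_iff, he₂, decide_eq_true_eq]
    simp only [kin z hz, kin w hw, Prod.Lex.toLex_le_toLex]
    simp
  · intro s hs
    simp only [kin s hs, kout x hx, Prod.Lex.toLex_le_toLex, decide_eq_false_iff_not]
    simp
  · intro y hy hxy s hs
    rw [← Bool.not_eq_true, he₁, not_le] at hxy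
    simp only [kin s hs, kout y hy, Prod.Lex.toLex_le_toLex, decide_eq_false_iff_not]
    simp [hxy.le, hxy.ne']

end OrderCoding

section Space

/-- The space `LO_ne(Γ)` of linear orders on `Γ` without endpoints. -/
abbrev LOne (Γ : Type*) : Type _ := {R : Γ × Γ → Bool // IsLinOrderNoEnd R}

lemma isClopen_setOf_coord {ι : Type*} (q : ι) (b : Bool) :
    IsClopen {R : ι → Bool | R q = b} :=
  (isClopen_discrete {b}).preimage (continuous_apply q)

lemma isGδ_isLinOrderNoEnd (Γ : Type*) [Countable Γ] :
    IsGδ {R : Γ × Γ → Bool | IsLinOrderNoEnd R} := by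
  have O : ∀ q : Γ × Γ, IsOpen {R : Γ × Γ → Bool | R q = true} :=
    fun q => (isClopen_setOf_coord q true).isOpen
  have C : ∀ q : Γ × Γ, IsOpen {R : Γ × Γ → Bool | ¬ R q = true} :=
    fun q => (isClopen_setOf_coord q true).compl.isOpen
  have K : ∀ p : Prop, IsOpen {_R : Γ × Γ → Bool | p} := fun p => isOpen_const
  have E : {R : Γ × Γ → Bool | IsLinOrderNoEnd R} =
      (⋂ x, {R | R (x, x) = true}) ∩
      ((⋂ x, ⋂ y, ({R | ¬ R (x, y) = true} ∪ ({R | ¬ R (y, x) = true} ∪ {_R | x = y}))) ∩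
      ((⋂ x, ⋂ y, ⋂ z, ({R | ¬ R (x, y) = true} ∪ ({R | ¬ R (y, z) = true} ∪
        {R | R (x, z) = true}))) ∩
      ((⋂ x, ⋂ y, ({R | R (x, y) = true} ∪ {R | R (y, x) = true})) ∩
      ((⋂ x, ⋃ y, ({_R | y ≠ x} ∩ {R | R (x, y) = true})) ∩
      (⋂ x, ⋃ y, ({_R | y ≠ x} ∩ {R | R (y, x) = true})))))) := by
    ext R
    simp only [Set.mem_inter_iff, Set.mem_iInter, Set.mem_iUnion, Set.mem_union, Set.mem_ofPred_eq,
      IsLinOrderNoEnd, ← imp_iff_not_or]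
  rw [E]
  refine .inter (.iInter fun x => (O _).isGδ) <|
    .inter (.iInter fun x => .iInter fun y => ((C _).union ((C _).union (K _))).isGδ) <|
    .inter (.iInter fun x => .iInter fun y => .iInter fun z =>
      ((C _).union ((C _).union (O _))).isGδ) <|
    .inter (.iInter fun x => .iInter fun y => ((O _).union (O _)).isGδ) <|
    .inter (.iInter fun x => (isOpen_iUnion fun y => (K _).inter (O _)).isGδ)
      (.iInter fun x => (isOpen_iUnion fun y => (K _).inter (O _)).isGδ)

instance LOne.instBaireSpace (Γ : Type*) [Countable Γ] : BaireSpace (LOne Γ) :=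
  (isGδ_isLinOrderNoEnd Γ).baireSpace_of_t2Space_locallyCompactSpace

instance LOne.instNonempty (Γ : Type*) [Countable Γ] [Infinite Γ] : Nonempty (LOne Γ) := by
  obtain ⟨e⟩ := nonempty_equiv_of_countable (α := Γ) (β := ℤ)
  refine ⟨⟨_, isLinOrderNoEnd_of_injective e e.injective (fun x => ⟨e.symm (e x + 1), ?_⟩)
    (fun x => ⟨e.symm (e x - 1), ?_⟩)⟩⟩ <;> simp

/-- A neighbourhood of `L` contains all orders with the same restriction as `L` to some finite
subset of `Γ`. -/
lemma exists_finset_of_isOpen {Γ : Type*} {U : Set (LOne Γ)} (hU : IsOpen U) {L : LOne Γ}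
    (hL : L ∈ U) : ∃ F : Finset Γ, ∀ L' : LOne Γ,
      (∀ z ∈ F, ∀ w ∈ F, L'.1 (z, w) = L.1 (z, w)) → L' ∈ U := by
  classical
  obtain ⟨V, hV, rfl⟩ := isOpen_induced_iff.1 hU
  obtain ⟨I, u, hu, hIu⟩ := isOpen_pi_iff.1 hV L.1 hL
  refine ⟨I.image Prod.fst ∪ I.image Prod.snd, fun L' hL' => hIu fun q hq => ?_⟩
  have h1 : q.1 ∈ I.image Prod.fst ∪ I.image Prod.snd :=
    Finset.mem_union_left _ (Finset.mem_image_of_mem _ hq)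
  have h2 : q.2 ∈ I.image Prod.fst ∪ I.image Prod.snd :=
    Finset.mem_union_right _ (Finset.mem_image_of_mem _ hq)
  have := hL' q.1 h1 q.2 h2
  rw [Prod.mk.eta] at this
  rw [this]
  exact (hu q hq).2

end Space

section Action

variable {Γ : Type*} [Group Γ]

lemma logicAct_logicAct_inv (γ : Γ) (R : Γ × Γ → Bool) : logicAct γ (logicAct γ⁻¹ R) = R := by
  funext q
  simp [logicAct]

lemma IsLinOrderNoEnd.logicAct {R : Γ × Γ → Bool} (h : IsLinOrderNoEnd R) (γ : Γ) :
    IsLinOrderNoEnd (logicAct γ R) := by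
  obtain ⟨h1, h2, h3, h4, h5, h6⟩ := h
  refine ⟨fun x => h1 _, fun x y a b => mul_left_cancel (h2 _ _ a b),
    fun x y z a b => h3 _ _ _ a b, fun x y => h4 _ _, fun x => ?_, fun x => ?_⟩
  · obtain ⟨y, hy, hxy⟩ := h5 (γ⁻¹ * x)
    exact ⟨γ * y, fun h => hy (by simp [← h]), by simpa [_root_.logicAct] using hxy⟩
  · obtain ⟨y, hy, hxy⟩ := h6 (γ⁻¹ * x)
    exact ⟨γ * y, fun h => hy (by simp [← h]), by simpa [_root_.logicAct] using hxy⟩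

/-- The logic action on the space of linear orders without endpoints. -/
def LOne.act (γ : Γ) (L : LOne Γ) : LOne Γ := ⟨logicAct γ L.1, L.2.logicAct γ⟩

lemma LOne.act_act_inv (γ : Γ) (L : LOne Γ) : LOne.act γ (LOne.act γ⁻¹ L) = L :=
  Subtype.ext (logicAct_logicAct_inv γ L.1)

lemma LOne.continuous_act (γ : Γ) : Continuous (LOne.act γ : LOne Γ → LOne Γ) :=
  Continuous.subtype_mk (f := fun L : LOne Γ => logicAct γ L.1)
    (continuous_pi fun q => (continuous_apply (γ⁻¹ * q.1, γ⁻¹ * q.2)).comp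
      continuous_subtype_val) _

/-- The logic action by a fixed group element, as a homeomorphism. -/
def LOne.homeo (γ : Γ) : LOne Γ ≃ₜ LOne Γ where
  toFun := LOne.act γ
  invFun := LOne.act γ⁻¹
  left_inv L := by simpa using LOne.act_act_inv γ⁻¹ L
  right_inv := LOne.act_act_inv γ
  continuous_toFun := LOne.continuous_act γ
  continuous_invFun := LOne.continuous_act γ⁻¹

/-- Some translate of a finite set is disjoint from a given finite set. -/
lemma exists_translate_disjoint [Infinite Γ] (F₀ F₁ : Finset Γ) :
    ∃ γ : Γ, ∀ b ∈ F₀, γ * b ∉ F₁ := by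
  classical
  obtain ⟨γ, hγ⟩ :=
    Infinite.exists_notMem_finset ((F₁ ×ˢ F₀).image fun p => p.1 * p.2⁻¹)
  refine ⟨γ, fun b hb h => hγ ?_⟩
  exact Finset.mem_image.2 ⟨(γ * b, b), Finset.mem_product.2 ⟨h, hb⟩, by simp⟩

/-- The orders `L` in which, if `x < y`, some `γ * a` lies strictly between `x` and `y` with
`L ∈ γ · U`. -/
def intervalSet (U : Set (LOne Γ)) (a x y : Γ) : Set (LOne Γ) :=
  {L | L.1 (y, x) = true} ∪
    ⋃ γ : Γ, (LOne.act γ⁻¹ ⁻¹' U) ∩ ({L | L.1 (γ * a, x) = false} ∩ {L | L.1 (y, γ * a) = false})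

lemma isOpen_intervalSet {U : Set (LOne Γ)} (hU : IsOpen U) (a x y : Γ) :
    IsOpen (intervalSet U a x y) := by
  have O : ∀ (q : Γ × Γ) (b : Bool), IsOpen {L : LOne Γ | L.1 q = b} :=
    fun q b => (isClopen_setOf_coord q b).isOpen.preimage continuous_subtype_val
  exact (O _ _).union (isOpen_iUnion fun γ =>
    (hU.preimage (LOne.continuous_act _)).inter ((O _ _).inter (O _ _)))

lemma dense_interval_set [Infinite Γ] {U : Set (LOne Γ)} (hU : IsOpen U) (hne : U.Nonempty)
    (a x y : Γ) : Dense (intervalSet U a x y) := by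
  classical
  rw [dense_iff_inter_open]
  rintro V hV ⟨L₁, hL₁⟩
  obtain ⟨L₀, hL₀⟩ := hne
  obtain ⟨F₀, hF₀⟩ := exists_finset_of_isOpen hU hL₀
  obtain ⟨F₁, hF₁⟩ := exists_finset_of_isOpen hV hL₁
  by_cases hyx : L₁.1 (y, x) = true
  · exact ⟨L₁, hL₁, Or.inl hyx⟩
  obtain ⟨γ, hγ⟩ := exists_translate_disjoint (insert a F₀) (insert x (insert y F₁))
  let S : Finset Γ := (insert a F₀).image (γ * ·)
  have hS : ∀ z ∈ insert x (insert y F₁), z ∉ S := by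
    intro z hz hzS
    obtain ⟨b, hb, rfl⟩ := Finset.mem_image.1 hzS
    exact hγ b hb hz
  have hmem : ∀ b ∈ insert a F₀, γ * b ∈ S := fun b hb => Finset.mem_image_of_mem _ hb
  obtain ⟨R, hR, hR₁, hR₂, hRx, hRy⟩ :=
    exists_amalgam L₁.2 (L₀.2.logicAct γ) S x (hS x (by simp))
  refine ⟨⟨R, hR⟩, hF₁ _ fun z hz w hw => ?_, Or.inr (Set.mem_iUnion.2 ⟨γ, ?_, ?_, ?_⟩)⟩
  · exact hR₁ z (hS z (by simp [hz])) w (hS w (by simp [hw]))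
  · refine hF₀ _ fun z hz w hw => ?_
    have := hR₂ (γ * z) (hmem z (by simp [hz])) (γ * w) (hmem w (by simp [hw]))
    simpa [LOne.act, logicAct] using this
  · exact hRx _ (hmem a (by simp))
  · exact hRy y (hS y (by simp)) (by simpa using hyx) _ (hmem a (by simp))

end Action

/-- There is no Γ-invariant Borel set `X` comeagre in the space `LO_ne(Γ)`
of linear orders without endpoints together with a Borel Γ-equivariant map selecting
from each order in `X` a subset of order type `ℤ`. -/
theorem stmt_13 {Γ : Type*} [Group Γ] [Countable Γ] [Infinite Γ] :
    ¬ ∃ (X : Set (Γ × Γ → Bool)) (f : (Γ × Γ → Bool) → (Γ → Bool)),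
      X ⊆ {R | IsLinOrderNoEnd R} ∧ MeasurableSet X ∧
      (∀ γ : Γ, ∀ R ∈ X, logicAct γ R ∈ X) ∧
      IsMeagre {R : {R : Γ × Γ → Bool // IsLinOrderNoEnd R} |
        (R : Γ × Γ → Bool) ∉ X} ∧
      Measurable f ∧
      (∀ γ : Γ, ∀ R ∈ X, f (logicAct γ R) = fun a => f R (γ⁻¹ * a)) ∧
      ∀ R ∈ X, ∃ e : ℤ → Γ,
        (∀ n : ℤ, f R (e n) = true) ∧
        (∀ a : Γ, f R a = true → ∃ n : ℤ, e n = a) ∧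
        (∀ m n : ℤ, m ≤ n ↔ R (e m, e n) = true) := by
  rintro ⟨X, f, -, -, hXinv, hXm, hf, hfe, hZ⟩
  have hXres : ∀ᶠ L : LOne Γ in residual (LOne Γ), L.1 ∈ X := by
    have h : _ ∈ residual (LOne Γ) := hXm
    filter_upwards [h] with L hL
    simpa using hL
  -- Open sets `U a` representing the Borel sets `{L | a ∈ f L}` modulo meagre sets.
  have hA : ∀ a : Γ, ∃ U : Set (LOne Γ), IsOpen U ∧
      {L : LOne Γ | f L.1 a = true} =ᶠ[residual (LOne Γ)] U := fun a => by
    have hm : MeasurableSet {L : LOne Γ | f L.1 a = true} :=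
      ((measurable_pi_apply a).comp (hf.comp measurable_subtype_coe))
        (measurableSet_singleton true)
    exact hm.residualEq_isOpen
  choose U hUo hUA using hA
  obtain ⟨a, ha⟩ : ∃ a, (U a).Nonempty := by
    by_contra! hempty
    have hall : ∀ᶠ L in residual (LOne Γ), ∀ a, f L.1 a = true ↔ L ∈ U a :=
      eventually_countable_forall.2 fun a => (hUA a).mem_iff
    obtain ⟨L, hLX, hL⟩ := (dense_of_mem_residual (hXres.and hall)).nonempty
    obtain ⟨e, he, -, -⟩ := hZ L.1 hLX
    have := (hL _).1 (he 0)
    rw [hempty] at this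
    exact this
  -- By equivariance, membership of `L` in `γ · U a` generically forces `γ * a ∈ f L`.
  have hforce : ∀ᶠ L in residual (LOne Γ), ∀ γ : Γ, LOne.act γ⁻¹ L ∈ U a →
      f L.1 (γ * a) = true := by
    refine eventually_countable_forall.2 fun γ => ?_
    have ht := tendsto_residual_of_isOpenMap (LOne.homeo (γ⁻¹ : Γ)).continuous
      (LOne.homeo (γ⁻¹ : Γ)).isOpenMap
    filter_upwards [ht.eventually (hXres.and (hUA a).mem_iff)] with L hL hLU
    have h1 : LOne.act γ⁻¹ L ∈ {L : LOne Γ | f L.1 a = true} := hL.2.2 hLU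
    have h2 := congrFun (hfe γ (LOne.act γ⁻¹ L).1 hL.1) (γ * a)
    have h3 : logicAct γ (LOne.act γ⁻¹ L).1 = L.1 := logicAct_logicAct_inv γ L.1
    rw [h3, inv_mul_cancel_left] at h2
    exact h2.trans h1
  have hgen : ∀ᶠ L in residual (LOne Γ), ∀ x y : Γ, L ∈ intervalSet (U a) a x y :=
    eventually_countable_forall.2 fun x => eventually_countable_forall.2 fun y =>
      residual_of_dense_open (isOpen_intervalSet (hUo a) a x y)
        (dense_interval_set (hUo a) ha a x y)
  obtain ⟨L, hLX, hLf, hLg⟩ :=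
    (dense_of_mem_residual (hXres.and (hforce.and hgen))).nonempty
  obtain ⟨e, -, hsurj, hle⟩ := hZ L.1 hLX
  -- An element of `f L` strictly between the consecutive elements `e 0` and `e 1`.
  rcases hLg (e 0) (e 1) with h | h
  · exact absurd ((hle 1 0).2 h) (by norm_num)
  · obtain ⟨γ, hγU, h0, h1⟩ := Set.mem_iUnion.1 h
    obtain ⟨n, hn⟩ := hsurj _ (hLf γ hγU)
    simp only [Set.mem_ofPred_eq, ← hn, ← Bool.not_eq_true, ← hle] at h0 h1
    omega
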